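/- Let d ≥ 1 and let K1 and K2 be d×d real symmetric positive semidefinite matrices. Let φ ∈ ℝ^d be a unit vector with K1·φ = λ1·φ for some λ1 > 0, and let ψ ∈ ℝ^d be a unit vector with K2·ψ = λ2·ψ for some λ2 > 0. Suppose ψ = φ + e with ‖e‖ ≤ ε for some ε ≥ 0, and let a ≥ 0 be a constant such that vᵀ·K2·v ≤ a·‖v‖² for every v ∈ ℝ^d. Then |√(λ1·λ2)·(log λ1 − log λ2)| ≤ 2·∑_{i=1}^d ∑_{j=1}^d |K1(i,j) − K2(i,j)|·|φ(i)|·|φ(j)| + 2·a·ε·(2 + ε). -/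

import Mathlib

open Matrix

/-!
The hyperbolic substitution `u = (log x - log y) / 2` turns `x - y` into `2 √(x y) sinh u`, so
`|u| ≤ |sinh u|` gives `√(x y) |log x - log y| ≤ |x - y|`, and it remains to compare `l1` with `l2`.

As `K2 - l2` is Hermitian and kills `ψ`, its quadratic form takes the same value at `φ` and at
`φ - ψ`. Hence the Rayleigh quotient of `K2` at the unit vector `φ` differs from `l2` only by a term
of second order in `φ - ψ`, while its difference from `l1` is the quadratic form of `K1 - K2`
at `φ`.
-/

theorem abs_sqrt_mul_mul_log_sub_log_le {x y : ℝ} (hx : 0 < x) (hy : 0 < y) :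
    |√(x * y) * (Real.log x - Real.log y)| ≤ |x - y| := by
  set u := (Real.log x - Real.log y) / 2 with hu
  have h_sqrt : √(x * y) = Real.exp ((Real.log x + Real.log y) / 2) := by
    rw [Real.exp_half, Real.exp_add, Real.exp_log hx, Real.exp_log hy]
  have h_x : √(x * y) * Real.exp u = x := by
    rw [h_sqrt, ← Real.exp_add, hu, ← add_div, add_add_sub_cancel, add_self_div_two,
      Real.exp_log hx]
  have h_y : √(x * y) * Real.exp (-u) = y := by
    rw [h_sqrt, ← Real.exp_add, hu, ← sub_eq_add_neg, ← sub_div, add_sub_sub_cancel,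
      add_self_div_two, Real.exp_log hy]
  have h_sinh : |u| ≤ |Real.sinh u| := by
    rw [Real.abs_sinh]
    exact Real.self_le_sinh_iff.2 (abs_nonneg u)
  calc |√(x * y) * (Real.log x - Real.log y)| = √(x * y) * (2 * |u|) := by
        rw [abs_mul, abs_of_nonneg (Real.sqrt_nonneg _), hu, abs_div, abs_two,
          mul_div_cancel₀ _ two_ne_zero]
    _ ≤ √(x * y) * (2 * |Real.sinh u|) := by gcongr
    _ = |√(x * y) * (2 * Real.sinh u)| := by
        rw [abs_mul, abs_mul, abs_two, abs_of_nonneg (Real.sqrt_nonneg _)]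
    _ = |x - y| := by
        rw [Real.sinh_eq, mul_div_cancel₀ _ two_ne_zero, mul_sub, h_x, h_y]

theorem norm_dotProduct_mulVec_le {m n R : Type*} [Fintype m] [Fintype n]
    [NonUnitalSeminormedCommRing R] (u : m → R) (M : Matrix m n R) (v : n → R) :
    ‖u ⬝ᵥ M *ᵥ v‖ ≤ ∑ i, ∑ j, ‖M i j‖ * ‖u i‖ * ‖v j‖ := by
  simp only [dotProduct, mulVec, Finset.mul_sum]
  refine norm_sum_le_of_le _ fun i _ ↦ norm_sum_le_of_le _ fun j _ ↦ ?_
  calc ‖u i * (M i j * v j)‖ = ‖M i j * u i * v j‖ := by rw [mul_left_comm, mul_assoc]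
    _ ≤ ‖M i j‖ * ‖u i‖ * ‖v j‖ := norm_mul₃_le

theorem star_add_dotProduct_mulVec_add_of_mulVec_eq_zero {n R : Type*} [Fintype n]
    [NonUnitalRing R] [StarRing R] {M : Matrix n n R} (hM : M.IsHermitian) {v : n → R}
    (hv : M *ᵥ v = 0) (w : n → R) :
    star (v + w) ⬝ᵥ M *ᵥ (v + w) = star w ⬝ᵥ M *ᵥ w := by
  have hv_left : star v ᵥ* M = 0 := by
    rw [← hM.eq, ← star_mulVec, hv, star_zero]
  rw [mulVec_add, hv, zero_add, star_add, add_dotProduct, dotProduct_mulVec (star v), hv_left,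
    zero_dotProduct, zero_add]

section RCLike

open scoped ComplexOrder

variable {n 𝕜 : Type*} [Fintype n] [RCLike 𝕜]

theorem re_star_dotProduct_self (v : EuclideanSpace 𝕜 n) :
    RCLike.re (star v.ofLp ⬝ᵥ v.ofLp) = ‖v‖ ^ 2 := by
  rw [← inner_self_eq_norm_sq (𝕜 := 𝕜), EuclideanSpace.inner_eq_star_dotProduct, dotProduct_comm]

theorem re_star_dotProduct_real_smul_self (l : ℝ) (v : EuclideanSpace 𝕜 n) :
    RCLike.re (star v.ofLp ⬝ᵥ l • v.ofLp) = l * ‖v‖ ^ 2 := by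
  rw [dotProduct_smul, RCLike.smul_re, re_star_dotProduct_self]

theorem re_star_dotProduct_mulVec_sub_eq_of_mulVec_eq_smul {K : Matrix n n 𝕜}
    (hK : K.IsHermitian) {ψ : EuclideanSpace 𝕜 n} {l : ℝ} (hψ : K *ᵥ ψ = l • ψ.ofLp)
    (φ : EuclideanSpace 𝕜 n) :
    RCLike.re (star φ.ofLp ⬝ᵥ K *ᵥ φ) - l * ‖φ‖ ^ 2 =
      RCLike.re (star (φ - ψ).ofLp ⬝ᵥ K *ᵥ (φ - ψ).ofLp) - l * ‖φ - ψ‖ ^ 2 := by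
  classical
  have h_shift_hermitian : (K - l • (1 : Matrix n n 𝕜)).IsHermitian :=
    hK.sub (isHermitian_one.smul (IsSelfAdjoint.all l))
  have h_shift_ψ : (K - l • (1 : Matrix n n 𝕜)) *ᵥ ψ = 0 := by
    rw [sub_mulVec, smul_mulVec, one_mulVec, hψ, sub_self]
  have h_shift_form (v : EuclideanSpace 𝕜 n) :
      RCLike.re (star v.ofLp ⬝ᵥ (K - l • (1 : Matrix n n 𝕜)) *ᵥ v) =
        RCLike.re (star v.ofLp ⬝ᵥ K *ᵥ v) - l * ‖v‖ ^ 2 := by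
    rw [sub_mulVec, smul_mulVec, one_mulVec, dotProduct_sub, map_sub,
      re_star_dotProduct_real_smul_self]
  rw [← h_shift_form, ← h_shift_form,
    ← star_add_dotProduct_mulVec_add_of_mulVec_eq_zero h_shift_hermitian h_shift_ψ (φ - ψ).ofLp,
    ← WithLp.ofLp_add, add_sub_cancel]

theorem abs_re_star_dotProduct_mulVec_sub_le_of_mulVec_eq_smul {K : Matrix n n 𝕜}
    (hK : K.PosSemidef) {ψ : EuclideanSpace 𝕜 n} (hψ₀ : ψ ≠ 0) {l : ℝ}
    (hψ : K *ᵥ ψ = l • ψ.ofLp) {a : ℝ}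
    (haK : ∀ v : EuclideanSpace 𝕜 n, RCLike.re (star v.ofLp ⬝ᵥ K *ᵥ v) ≤ a * ‖v‖ ^ 2)
    (φ : EuclideanSpace 𝕜 n) :
    |RCLike.re (star φ.ofLp ⬝ᵥ K *ᵥ φ) - l * ‖φ‖ ^ 2| ≤ a * ‖φ - ψ‖ ^ 2 := by
  have h_norm_pos : 0 < ‖ψ‖ ^ 2 := by positivity
  have h_form_ψ : RCLike.re (star ψ.ofLp ⬝ᵥ K *ᵥ ψ) = l * ‖ψ‖ ^ 2 := by
    rw [hψ, re_star_dotProduct_real_smul_self]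
  have hl_nonneg : 0 ≤ l :=
    nonneg_of_mul_nonneg_left (h_form_ψ ▸ hK.re_dotProduct_nonneg ψ) h_norm_pos
  have hl_le : l ≤ a := le_of_mul_le_mul_right (h_form_ψ ▸ haK ψ) h_norm_pos
  rw [re_star_dotProduct_mulVec_sub_eq_of_mulVec_eq_smul hK.isHermitian hψ]
  exact abs_sub_le_of_nonneg_of_le (hK.re_dotProduct_nonneg _) (haK _) (by positivity) (by gcongr)

theorem abs_re_star_dotProduct_mulVec_sub_le_sum (K1 K2 : Matrix n n 𝕜) (v : n → 𝕜) :
    |RCLike.re (star v ⬝ᵥ K1 *ᵥ v) - RCLike.re (star v ⬝ᵥ K2 *ᵥ v)| ≤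
      ∑ i, ∑ j, ‖K1 i j - K2 i j‖ * ‖v i‖ * ‖v j‖ := by
  rw [← map_sub, ← dotProduct_sub, ← sub_mulVec]
  refine (RCLike.abs_re_le_norm _).trans ((norm_dotProduct_mulVec_le _ _ _).trans_eq ?_)
  simp only [Matrix.sub_apply, Pi.star_apply, norm_star]

theorem spsd_approx_eigvec_diff_eigenvalue_bound_general {K1 K2 : Matrix n n 𝕜}
    (hK2 : K2.PosSemidef) {φ ψ : EuclideanSpace 𝕜 n} (hφ : ‖φ‖ = 1) (hψ : ψ ≠ 0)
    {l1 l2 : ℝ} (hl1 : 0 < l1) (hl2 : 0 < l2)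
    (h1 : K1 *ᵥ φ = l1 • φ.ofLp) (h2 : K2 *ᵥ ψ = l2 • ψ.ofLp) {a : ℝ}
    (haK : ∀ v : EuclideanSpace 𝕜 n, RCLike.re (star v.ofLp ⬝ᵥ K2 *ᵥ v) ≤ a * ‖v‖ ^ 2) :
    |√(l1 * l2) * (Real.log l1 - Real.log l2)| ≤
      ∑ i, ∑ j, ‖K1 i j - K2 i j‖ * ‖φ i‖ * ‖φ j‖ + a * ‖φ - ψ‖ ^ 2 := by
  set q := RCLike.re (star φ.ofLp ⬝ᵥ K2 *ᵥ φ)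
  have h_form_K1 : RCLike.re (star φ.ofLp ⬝ᵥ K1 *ᵥ φ) = l1 := by
    rw [h1, re_star_dotProduct_real_smul_self, hφ, one_pow, mul_one]
  have h_K1_K2 : |l1 - q| ≤ ∑ i, ∑ j, ‖K1 i j - K2 i j‖ * ‖φ i‖ * ‖φ j‖ :=
    h_form_K1 ▸ abs_re_star_dotProduct_mulVec_sub_le_sum K1 K2 φ
  have h_K2_l2 : |q - l2| ≤ a * ‖φ - ψ‖ ^ 2 := by
    simpa only [hφ, one_pow, mul_one] using
      abs_re_star_dotProduct_mulVec_sub_le_of_mulVec_eq_smul hK2 hψ h2 haK φ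
  calc |√(l1 * l2) * (Real.log l1 - Real.log l2)| ≤ |l1 - l2| :=
        abs_sqrt_mul_mul_log_sub_log_le hl1 hl2
    _ ≤ |l1 - q| + |q - l2| := abs_sub_le l1 q l2
    _ ≤ _ := add_le_add h_K1_K2 h_K2_l2

end RCLike

/-- Proposition 2 of the paper: bound on the eigenvalue of the Riemannian difference
operator when the eigenvectors of the two PSD kernels are only approximately equal. -/
theorem spsd_approx_eigvec_diff_eigenvalue_bound
    (d : ℕ) (hd : 1 ≤ d) (K1 K2 : Matrix (Fin d) (Fin d) ℝ)
    (hK1 : K1.PosSemidef) (hK2 : K2.PosSemidef)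
    (φ ψ e : EuclideanSpace ℝ (Fin d)) (hφ : ‖φ‖ = 1) (hψ : ‖ψ‖ = 1)
    (l1 l2 : ℝ) (hl1 : 0 < l1) (hl2 : 0 < l2)
    (h1 : K1 *ᵥ φ = l1 • (φ : Fin d → ℝ))
    (h2 : K2 *ᵥ ψ = l2 • (ψ : Fin d → ℝ))
    (ε : ℝ) (hε : 0 ≤ ε) (hψe : ψ = φ + e) (he : ‖e‖ ≤ ε)
    (a : ℝ) (ha : 0 ≤ a)
    (haK : ∀ v : EuclideanSpace ℝ (Fin d), (v : Fin d → ℝ) ⬝ᵥ (K2 *ᵥ v) ≤ a * ‖v‖ ^ 2) :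
    |Real.sqrt (l1 * l2) * (Real.log l1 - Real.log l2)| ≤
      2 * ∑ i, ∑ j, |K1 i j - K2 i j| * |φ i| * |φ j| + 2 * a * ε * (2 + ε) := by
  have h_dist : ‖φ - ψ‖ ≤ ε := by rwa [hψe, sub_add_cancel_left, norm_neg]
  refine (spsd_approx_eigvec_diff_eigenvalue_bound_general hK2 hφ (ne_zero_of_norm_ne_zero
    (hψ ▸ one_ne_zero)) hl1 hl2 h1 h2 haK).trans (add_le_add ?_ ?_)
  · exact le_mul_of_one_le_left (by positivity) one_le_two
  · calc a * ‖φ - ψ‖ ^ 2 ≤ a * ε ^ 2 := by gcongr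
      _ ≤ 2 * a * ε * (2 + ε) := by linarith [mul_nonneg ha hε, mul_nonneg ha (sq_nonneg ε)]
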